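/- For all real numbers $A$, $B$, $C$, setting $\eta = \sqrt{A^2 + B^2 + C^2}$, one has $\frac{1}{2\pi^2} \int_0^{\pi} \int_0^{2\pi} \sin^2\big(A \sin\theta \cos\phi + B \sin\theta \sin\phi + C \cos\theta\big)\, d\phi\, d\theta = \frac{1}{2}\Big(1 - J_0(\eta + C)\, J_0(\eta - C)\Big)$. -/

import Mathlib

/-- The Bessel function of the first kind of order zero, defined by its
integral representation `J₀(x) = (1/2π) ∫₀^{2π} cos(x sin t) dt`. -/
noncomputable def besselJ0 (x : ℝ) : ℝ :=
  (1 / (2 * Real.pi)) * ∫ t in (0 : ℝ)..(2 * Real.pi), Real.cos (x * Real.sin t)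

/-!
Since `sin² ς = (1 - cos 2ς) / 2`, only the mean of `cos 2ς` is needed. Rotating the azimuth
replaces `A cos φ + B sin φ` by `ρ sin φ` with `ρ² = A² + B²`; averaging over the elevation first
then gives `J₀(√((2ρ sin φ)² + (2C)²))`. On the other side, expanding
`cos (y sin t - x sin (s + t))` and averaging over both angles yields Neumann's formula:
`J₀(x) J₀(y)` is the mean over `s` of `J₀(√(x² + y² - 2xy cos s))`. At `s = 2φ`, `x = η + C` and
`y = η - C`, the radicand is `(x - y)² + 4xy sin² φ = (2C)² + 4ρ² sin² φ`, so the averages agree.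
-/

open Real Function

section IntervalIntegral

variable {E : Type*} [NormedAddCommGroup E] [NormedSpace ℝ E]

lemma integral_integral_swap_of_continuous {f : ℝ → ℝ → E} (hf : Continuous f.uncurry)
    (a b c d : ℝ) : ∫ x in a..b, ∫ y in c..d, f x y = ∫ y in c..d, ∫ x in a..b, f x y :=
  MeasureTheory.intervalIntegral_intervalIntegral_swap <|
    (hf.continuousOn.integrableOn_compact (isCompact_uIcc.prod isCompact_uIcc)).mono_set <|
      Set.prod_mono Set.uIoc_subset_uIcc Set.uIoc_subset_uIcc

lemma integral_comp_add_right_of_periodic {f : ℝ → E} {T : ℝ} (hf : Periodic f T) (d : ℝ) :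
    ∫ t in (0 : ℝ)..T, f (t + d) = ∫ t in (0 : ℝ)..T, f t := by
  rw [intervalIntegral.integral_comp_add_right, zero_add, add_comm T,
    hf.intervalIntegral_add_eq d 0, zero_add]

lemma integral_comp_int_mul_of_periodic {f : ℝ → E} {T : ℝ} (hf : Periodic f T)
    (hfi : ∀ t₁ t₂, IntervalIntegrable f MeasureTheory.volume t₁ t₂) {n : ℤ} (hn : n ≠ 0) :
    ∫ t in (0 : ℝ)..T, f (n * t) = ∫ t in (0 : ℝ)..T, f t := by
  have hn' : (n : ℝ) ≠ 0 := Int.cast_ne_zero.mpr hn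
  have hperiods := hf.intervalIntegral_add_zsmul_eq n 0 hfi
  rw [zero_add, zero_add, zsmul_eq_mul, ← Int.cast_smul_eq_zsmul ℝ] at hperiods
  rw [intervalIntegral.integral_comp_mul_left f hn', mul_zero, hperiods, inv_smul_smul₀ hn']

lemma integral_eq_zero_of_antiperiodic {f : ℝ → E} {T : ℝ} (hf : Antiperiodic f T) :
    ∫ t in (0 : ℝ)..2 * T, f t = 0 := by
  have hshift := integral_comp_add_right_of_periodic hf.periodic_two_mul T
  simp only [hf _, intervalIntegral.integral_neg] at hshift
  have := IsAddTorsionFree.of_isTorsionFree ℝ E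
  exact self_eq_neg.mp hshift.symm

lemma integral_comp_mul_sin_add_mul_cos (F : ℝ → E) (a b : ℝ) :
    ∫ t in (0 : ℝ)..2 * π, F (a * sin t + b * cos t) =
      ∫ t in (0 : ℝ)..2 * π, F (√(a ^ 2 + b ^ 2) * sin t) := by
  set δ := Complex.arg ⟨a, b⟩
  have ha : √(a ^ 2 + b ^ 2) * cos δ = a := by
    simpa only [Complex.norm_eq_sqrt_sq_add_sq] using Complex.norm_mul_cos_arg ⟨a, b⟩
  have hb : √(a ^ 2 + b ^ 2) * sin δ = b := by
    simpa only [Complex.norm_eq_sqrt_sq_add_sq] using Complex.norm_mul_sin_arg ⟨a, b⟩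
  have hperiodic : Periodic (fun t => F (√(a ^ 2 + b ^ 2) * sin t)) (2 * π) := fun t => by
    simp only [sin_add_two_pi]
  rw [← integral_comp_add_right_of_periodic hperiodic δ]
  congr! 3 with t
  rw [sin_add]
  linear_combination -sin t * ha - cos t * hb

lemma integral_integral_sin_sq {g : ℝ → ℝ → ℝ} (hg : Continuous g.uncurry) (a b c d : ℝ) :
    ∫ x in a..b, ∫ y in c..d, sin (g x y) ^ 2 =
      (b - a) * (d - c) / 2 - (∫ x in a..b, ∫ y in c..d, cos (2 * g x y)) / 2 := by
  have hinner (x : ℝ) : ∫ y in c..d, sin (g x y) ^ 2 =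
      (d - c) / 2 - (∫ y in c..d, cos (2 * g x y)) / 2 := by
    simp only [sin_sq_eq_half_sub]
    rw [intervalIntegral.integral_sub intervalIntegrable_const
      (Continuous.intervalIntegrable (by fun_prop) _ _), intervalIntegral.integral_const,
      intervalIntegral.integral_div, smul_eq_mul, mul_one_div]
  simp only [hinner]
  rw [intervalIntegral.integral_sub intervalIntegrable_const
    (Continuous.intervalIntegrable (by fun_prop) _ _), intervalIntegral.integral_const,
    intervalIntegral.integral_div, smul_eq_mul, mul_div_assoc]

end IntervalIntegral

section BesselJ0

lemma integral_cos_mul_sin (x : ℝ) :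
    ∫ t in (0 : ℝ)..2 * π, cos (x * sin t) = 2 * π * besselJ0 x := by
  rw [besselJ0, ← mul_assoc, mul_one_div_cancel two_pi_pos.ne', one_mul]

lemma integral_sin_mul_sin (x : ℝ) : ∫ t in (0 : ℝ)..2 * π, sin (x * sin t) = 0 :=
  integral_eq_zero_of_antiperiodic fun t => by rw [sin_add_pi, mul_neg, sin_neg]

@[fun_prop]
lemma continuous_besselJ0 : Continuous besselJ0 := by
  unfold besselJ0
  fun_prop

lemma integral_cos_mul_sin_add_mul_cos (a b : ℝ) :
    ∫ t in (0 : ℝ)..2 * π, cos (a * sin t + b * cos t) = 2 * π * besselJ0 √(a ^ 2 + b ^ 2) := by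
  rw [integral_comp_mul_sin_add_mul_cos, integral_cos_mul_sin]

lemma integral_zero_pi_cos_mul_sin_add_mul_cos (a b : ℝ) :
    ∫ t in (0 : ℝ)..π, cos (a * sin t + b * cos t) = π * besselJ0 √(a ^ 2 + b ^ 2) := by
  have hperiodic : Periodic (fun t => cos (a * sin t + b * cos t)) π := fun t => by
    simp only [sin_add_pi, cos_add_pi, mul_neg, ← neg_add, cos_neg]
  have hdouble := hperiodic.intervalIntegral_add_zsmul_eq 2 0 fun _ _ =>
    Continuous.intervalIntegrable (by fun_prop) _ _
  simp only [zero_add, zsmul_eq_mul, Int.cast_ofNat, integral_cos_mul_sin_add_mul_cos] at hdouble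
  linarith

lemma integral_cos_sub_mul_sin_add (x y t : ℝ) :
    ∫ s in (0 : ℝ)..2 * π, cos (y * sin t - x * sin (s + t)) =
      2 * π * besselJ0 x * cos (y * sin t) := by
  have hperiodic : Periodic (fun s => cos (y * sin t - x * sin s)) (2 * π) := fun s => by
    simp only [sin_add_two_pi]
  rw [integral_comp_add_right_of_periodic hperiodic]
  simp only [cos_sub]
  rw [intervalIntegral.integral_add (Continuous.intervalIntegrable (by fun_prop) _ _)
    (Continuous.intervalIntegrable (by fun_prop) _ _), intervalIntegral.integral_const_mul,
    intervalIntegral.integral_const_mul, integral_cos_mul_sin, integral_sin_mul_sin, mul_zero,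
    add_zero, mul_comm]

lemma integral_besselJ0_sqrt_sub_mul_cos (x y : ℝ) :
    ∫ s in (0 : ℝ)..2 * π, besselJ0 √(x ^ 2 + y ^ 2 - 2 * x * y * cos s) =
      2 * π * (besselJ0 x * besselJ0 y) := by
  have hinner (s : ℝ) : ∫ t in (0 : ℝ)..2 * π, cos (y * sin t - x * sin (s + t)) =
      2 * π * besselJ0 √(x ^ 2 + y ^ 2 - 2 * x * y * cos s) := by
    have hnorm : x ^ 2 + y ^ 2 - 2 * x * y * cos s =
        (y - x * cos s) ^ 2 + (-(x * sin s)) ^ 2 := by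
      linear_combination -x ^ 2 * sin_sq_add_cos_sq s
    rw [hnorm, ← integral_cos_mul_sin_add_mul_cos]
    congr! 3 with t
    rw [sin_add]
    ring
  refine mul_left_cancel₀ two_pi_pos.ne' ?_
  calc 2 * π * ∫ s in (0 : ℝ)..2 * π, besselJ0 √(x ^ 2 + y ^ 2 - 2 * x * y * cos s)
      = ∫ s in (0 : ℝ)..2 * π, ∫ t in (0 : ℝ)..2 * π, cos (y * sin t - x * sin (s + t)) := by
        simp only [hinner, intervalIntegral.integral_const_mul]
    _ = ∫ t in (0 : ℝ)..2 * π, ∫ s in (0 : ℝ)..2 * π, cos (y * sin t - x * sin (s + t)) :=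
        integral_integral_swap_of_continuous (by fun_prop) _ _ _ _
    _ = 2 * π * besselJ0 x * (2 * π * besselJ0 y) := by
        simp only [integral_cos_sub_mul_sin_add, intervalIntegral.integral_const_mul,
          integral_cos_mul_sin]
    _ = 2 * π * (2 * π * (besselJ0 x * besselJ0 y)) := by ring

lemma integral_besselJ0_sqrt_add_mul_sin_sq (x y : ℝ) :
    ∫ φ in (0 : ℝ)..2 * π, besselJ0 √((x - y) ^ 2 + 4 * x * y * sin φ ^ 2) =
      2 * π * (besselJ0 x * besselJ0 y) := by
  have hperiodic : Periodic (fun s => besselJ0 √(x ^ 2 + y ^ 2 - 2 * x * y * cos s)) (2 * π) :=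
    fun s => by simp only [cos_add_two_pi]
  rw [← integral_besselJ0_sqrt_sub_mul_cos, ← integral_comp_int_mul_of_periodic hperiodic
    (fun _ _ => Continuous.intervalIntegrable (by fun_prop) _ _) two_ne_zero]
  congr! 4 with φ
  push_cast
  linear_combination 4 * x * y * sin_sq_eq_half_sub φ

end BesselJ0

section DirectionPhase

/-- The phase `ς_p` of the paper: the inner product of `(A, B, C)` with the unit vector of
elevation `θ`, measured from the third axis, and azimuth `φ`. -/
noncomputable def directionPhase (A B C θ φ : ℝ) : ℝ :=
  A * sin θ * cos φ + B * sin θ * sin φ + C * cos θ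

lemma continuous_directionPhase (A B C : ℝ) : Continuous (directionPhase A B C).uncurry := by
  unfold directionPhase
  fun_prop

lemma integral_comp_directionPhase {E : Type*} [NormedAddCommGroup E] [NormedSpace ℝ E]
    (F : ℝ → E) (A B C θ : ℝ) :
    ∫ φ in (0 : ℝ)..2 * π, F (directionPhase A B C θ φ) =
      ∫ φ in (0 : ℝ)..2 * π, F (√(A ^ 2 + B ^ 2) * sin φ * sin θ + C * cos θ) := by
  rw [add_comm (A ^ 2),
    ← integral_comp_mul_sin_add_mul_cos (fun z => F (z * sin θ + C * cos θ)) B A]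
  congr! 3 with φ
  rw [directionPhase]
  ring

lemma integral_integral_cos_two_mul_directionPhase (A B C : ℝ) :
    ∫ θ in (0 : ℝ)..π, ∫ φ in (0 : ℝ)..2 * π, cos (2 * directionPhase A B C θ φ) =
      2 * π ^ 2 * (besselJ0 (√(A ^ 2 + B ^ 2 + C ^ 2) + C) *
        besselJ0 (√(A ^ 2 + B ^ 2 + C ^ 2) - C)) := by
  set ρ := √(A ^ 2 + B ^ 2) with hρ
  set η := √(A ^ 2 + B ^ 2 + C ^ 2) with hη
  have hρη : ρ ^ 2 = (η + C) * (η - C) := by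
    rw [← sq_sub_sq, hρ, hη, sq_sqrt (by positivity), sq_sqrt (by positivity), add_sub_cancel_right]
  calc ∫ θ in (0 : ℝ)..π, ∫ φ in (0 : ℝ)..2 * π, cos (2 * directionPhase A B C θ φ)
      = ∫ θ in (0 : ℝ)..π, ∫ φ in (0 : ℝ)..2 * π, cos (2 * ρ * sin φ * sin θ + 2 * C * cos θ) := by
        simp only [integral_comp_directionPhase fun z => cos (2 * z), ← hρ, mul_add, mul_assoc]
    _ = ∫ φ in (0 : ℝ)..2 * π, ∫ θ in (0 : ℝ)..π, cos (2 * ρ * sin φ * sin θ + 2 * C * cos θ) :=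
        integral_integral_swap_of_continuous (by fun_prop) _ _ _ _
    _ = π * ∫ φ in (0 : ℝ)..2 * π, besselJ0 √((2 * ρ * sin φ) ^ 2 + (2 * C) ^ 2) := by
        simp only [integral_zero_pi_cos_mul_sin_add_mul_cos, intervalIntegral.integral_const_mul]
    _ = π * ∫ φ in (0 : ℝ)..2 * π, besselJ0
          √(((η + C) - (η - C)) ^ 2 + 4 * (η + C) * (η - C) * sin φ ^ 2) := by
        congr! 5 with φ
        linear_combination 4 * sin φ ^ 2 * hρη
    _ = 2 * π ^ 2 * (besselJ0 (η + C) * besselJ0 (η - C)) := by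
        rw [integral_besselJ0_sqrt_add_mul_sin_sq]
        ring

end DirectionPhase

/-- Analytic core of Lemma 4 of the paper: the average of `sin²` of a linear
phase in a random direction equals `½(1 - J₀(η + C) J₀(η - C))` with
`η = √(A² + B² + C²)`. -/
theorem expectation_sin_sq_random_direction (A B C : ℝ) :
    (1 / (2 * Real.pi ^ 2)) *
        ∫ θ in (0 : ℝ)..Real.pi, ∫ φ in (0 : ℝ)..(2 * Real.pi),
          Real.sin (A * Real.sin θ * Real.cos φ + B * Real.sin θ * Real.sin φ +
            C * Real.cos θ) ^ 2 =
      (1 / 2) * (1 - besselJ0 (Real.sqrt (A ^ 2 + B ^ 2 + C ^ 2) + C) *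
        besselJ0 (Real.sqrt (A ^ 2 + B ^ 2 + C ^ 2) - C)) := by
  have hsin_sq := integral_integral_sin_sq (continuous_directionPhase A B C) 0 π 0 (2 * π)
  rw [integral_integral_cos_two_mul_directionPhase] at hsin_sq
  simp only [directionPhase] at hsin_sq
  rw [hsin_sq]
  field_simp
  ring
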